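/- arXiv:1710.09476 — 8 statements merged into one kernel-verified Lean document; each statement's English description precedes it below -/
import Mathlib

section
/- Let κ, δ, σ, λ > 0 and μ̄ ∈ ℝ, and define η(λ) := (δ⁴/(4κσ²)) · λ/(κσ²(κ+λ)² + (κ+λ)δ²) + μ̄²/(2σ²). Then η(λ) ≤ (δ²/(4σ²κ)) · δ²/(2σκ√(σ²κ² + δ²) + 2σ²κ² + δ²) + μ̄²/(2σ²), and equality holds if and only if λ = λ̂ := √(κ² + δ²/σ²). -/
/-- The long-term growth rate `η(λ)` of ExpMA strategies is bounded above by the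
stated constant, with equality iff `λ = √(κ² + δ²/σ²)`. -/
theorem expma_growth_rate_upper_bound
    (κ δ σ μbar lam : ℝ) (hκ : 0 < κ) (hδ : 0 < δ) (hσ : 0 < σ) (hlam : 0 < lam)
    (η : ℝ → ℝ)
    (hη : ∀ l : ℝ, η l =
      δ ^ 4 / (4 * κ * σ ^ 2) * (l / (κ * σ ^ 2 * (κ + l) ^ 2 + (κ + l) * δ ^ 2))
        + μbar ^ 2 / (2 * σ ^ 2)) :
    η lam ≤ δ ^ 2 / (4 * σ ^ 2 * κ)
        * (δ ^ 2 / (2 * σ * κ * Real.sqrt (σ ^ 2 * κ ^ 2 + δ ^ 2) + 2 * σ ^ 2 * κ ^ 2 + δ ^ 2))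
        + μbar ^ 2 / (2 * σ ^ 2)
    ∧ (η lam = δ ^ 2 / (4 * σ ^ 2 * κ)
        * (δ ^ 2 / (2 * σ * κ * Real.sqrt (σ ^ 2 * κ ^ 2 + δ ^ 2) + 2 * σ ^ 2 * κ ^ 2 + δ ^ 2))
        + μbar ^ 2 / (2 * σ ^ 2)
        ↔ lam = Real.sqrt (κ ^ 2 + δ ^ 2 / σ ^ 2)) := by
  have hs : Real.sqrt (κ ^ 2 + δ ^ 2 / σ ^ 2) = Real.sqrt (σ ^ 2 * κ ^ 2 + δ ^ 2) / σ := by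
    have h : κ ^ 2 + δ ^ 2 / σ ^ 2 = (σ ^ 2 * κ ^ 2 + δ ^ 2) / σ ^ 2 := by
      field_simp
    rw [h, Real.sqrt_div (by positivity), Real.sqrt_sq hσ.le]
  have hS2 : Real.sqrt (σ ^ 2 * κ ^ 2 + δ ^ 2) ^ 2 = σ ^ 2 * κ ^ 2 + δ ^ 2 :=
    Real.sq_sqrt (by positivity)
  have hS0 : 0 ≤ Real.sqrt (σ ^ 2 * κ ^ 2 + δ ^ 2) := Real.sqrt_nonneg _
  rw [hs, hη lam]
  generalize Real.sqrt (σ ^ 2 * κ ^ 2 + δ ^ 2) = S at hS2 hS0 ⊢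
  have hB : 0 < 2 * σ * κ * S + 2 * σ ^ 2 * κ ^ 2 + δ ^ 2 := by positivity
  have hD : 0 < κ * σ ^ 2 * (κ + lam) ^ 2 + (κ + lam) * δ ^ 2 := by positivity
  have hDB : κ * σ ^ 2 * (κ + lam) ^ 2 + (κ + lam) * δ ^ 2
      = lam * (2 * σ * κ * S + 2 * σ ^ 2 * κ ^ 2 + δ ^ 2) + κ * (S - σ * lam) ^ 2 := by
    linear_combination (-κ) * hS2
  generalize 2 * σ * κ * S + 2 * σ ^ 2 * κ ^ 2 + δ ^ 2 = B at hB hDB ⊢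
  generalize κ * σ ^ 2 * (κ + lam) ^ 2 + (κ + lam) * δ ^ 2 = D at hD hDB ⊢
  have key : δ ^ 2 / (4 * σ ^ 2 * κ) * (δ ^ 2 / B) - δ ^ 4 / (4 * κ * σ ^ 2) * (lam / D)
      = δ ^ 4 / (4 * σ ^ 2 * B * D) * (S - σ * lam) ^ 2 := by
    have h1 : δ ^ 2 / (4 * σ ^ 2 * κ) * (δ ^ 2 / B) - δ ^ 4 / (4 * κ * σ ^ 2) * (lam / D)
      = δ ^ 4 / (4 * σ ^ 2 * κ * B * D) * (D - lam * B) := by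
      field_simp
    have h2 : D - lam * B = κ * (S - σ * lam) ^ 2 := by linarith
    rw [h1, h2]
    field_simp
  have hC : 0 < δ ^ 4 / (4 * σ ^ 2 * B * D) := by positivity
  constructor
  · have := mul_nonneg hC.le (sq_nonneg (S - σ * lam))
    linarith
  · rw [eq_div_iff hσ.ne']
    constructor
    · intro h
      have h0 : δ ^ 4 / (4 * σ ^ 2 * B * D) * (S - σ * lam) ^ 2 = 0 := by linarith
      have h1 := (mul_eq_zero.mp h0).resolve_left hC.ne'
      have h2 : S - σ * lam = 0 := by simpa using h1
      linarith
    · intro h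
      have h2 : S - σ * lam = 0 := by linarith
      rw [h2] at key
      linarith
end

section
/- Let κ, δ, σ > 0 and μ̄ ∈ ℝ, and define η(λ) := (δ⁴/(4κσ²)) · λ/(κσ²(κ+λ)² + (κ+λ)δ²) + μ̄²/(2σ²) for λ > 0. Then for every λ > 0, η is differentiable at λ with derivative η'(λ) = −(δ⁴/4) · (λ² − (κ² + δ²/σ²)) / (σ²κ(κ+λ)² + δ²(κ+λ))². -/
/-- Derivative of the long-term growth rate `η` in the averaging parameter `λ`. -/
theorem expma_growth_rate_deriv
    (κ δ σ μbar : ℝ) (hκ : 0 < κ) (hδ : 0 < δ) (hσ : 0 < σ) :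
    ∀ lam : ℝ, 0 < lam →
      HasDerivAt
        (fun l : ℝ =>
          δ ^ 4 / (4 * κ * σ ^ 2) * (l / (κ * σ ^ 2 * (κ + l) ^ 2 + (κ + l) * δ ^ 2))
            + μbar ^ 2 / (2 * σ ^ 2))
        (-(δ ^ 4 / 4) * (lam ^ 2 - (κ ^ 2 + δ ^ 2 / σ ^ 2))
          / (σ ^ 2 * κ * (κ + lam) ^ 2 + δ ^ 2 * (κ + lam)) ^ 2)
        lam := by
  intro lam hl
  have hD : κ * σ ^ 2 * (κ + lam) ^ 2 + (κ + lam) * δ ^ 2 ≠ 0 := by positivity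
  have h1 : HasDerivAt (fun l : ℝ => κ + l) 1 lam := (hasDerivAt_id' lam).const_add κ
  have h2 : HasDerivAt (fun l : ℝ => κ * σ ^ 2 * (κ + l) ^ 2 + (κ + l) * δ ^ 2)
      (κ * σ ^ 2 * (2 * (κ + lam)) + δ ^ 2) lam := by
    have h3 := ((h1.fun_pow 2).const_mul (κ * σ ^ 2)).fun_add (h1.mul_const (δ ^ 2))
    refine h3.congr_deriv ?_
    norm_num
  have h4 := (((hasDerivAt_id' lam).fun_div h2 hD).const_mul
    (δ ^ 4 / (4 * κ * σ ^ 2))).add_const (μbar ^ 2 / (2 * σ ^ 2))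
  refine h4.congr_deriv ?_
  have e : σ ^ 2 * κ * (κ + lam) ^ 2 + δ ^ 2 * (κ + lam)
      = κ * σ ^ 2 * (κ + lam) ^ 2 + (κ + lam) * δ ^ 2 := by ring
  rw [e, ← mul_div_assoc]
  congr 1
  field_simp
  ring
end

section
/- Fix λ, σ, δ > 0 and μ̄ ≠ 0. Define, for κ > 0, η(λ; κ) := (δ⁴/(4κσ²)) · λ/(κσ²(κ+λ)² + (κ+λ)δ²) + μ̄²/(2σ²) and ξ(κ) := δ²/(4κσ²) + μ̄²/(2σ²). Then lim_{κ→0⁺} η(λ; κ)/ξ(κ) = 1 and lim_{κ→∞} η(λ; κ)/ξ(κ) = 1. -/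
open Filter

/-- Asymptotics in the mean-reversion speed `κ`:
`η(λ;κ)/ξ(κ) → 1` as `κ → 0⁺` and as `κ → ∞`. -/
theorem growth_rate_ratio_limits_in_kappa
    (lam σ δ μbar : ℝ) (hlam : 0 < lam) (hσ : 0 < σ) (hδ : 0 < δ) (hμ : μbar ≠ 0)
    (η ξ : ℝ → ℝ)
    (hη : ∀ κ : ℝ, η κ =
      δ ^ 4 / (4 * κ * σ ^ 2) * (lam / (κ * σ ^ 2 * (κ + lam) ^ 2 + (κ + lam) * δ ^ 2))
        + μbar ^ 2 / (2 * σ ^ 2))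
    (hξ : ∀ κ : ℝ, ξ κ = δ ^ 2 / (4 * κ * σ ^ 2) + μbar ^ 2 / (2 * σ ^ 2)) :
    Tendsto (fun κ : ℝ => η κ / ξ κ) (nhdsWithin 0 (Set.Ioi 0)) (nhds 1)
    ∧ Tendsto (fun κ : ℝ => η κ / ξ κ) atTop (nhds 1) := by
  have hσ2 : (0:ℝ) < σ ^ 2 := by positivity
  have hδ2 : (0:ℝ) < δ ^ 2 := by positivity
  have hμ2 : (0:ℝ) < μbar ^ 2 := by positivity
  constructor
  · have hc : ContinuousAt (fun κ : ℝ =>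
        (δ ^ 4 * (lam / (κ * σ ^ 2 * (κ + lam) ^ 2 + (κ + lam) * δ ^ 2)) + 2 * κ * μbar ^ 2)
          / (δ ^ 2 + 2 * κ * μbar ^ 2)) 0 := by
      refine ContinuousAt.div (ContinuousAt.add (ContinuousAt.mul (by fun_prop)
        (ContinuousAt.div (by fun_prop) (by fun_prop) ?_)) (by fun_prop)) (by fun_prop) ?_
      · simp only [zero_mul, zero_add]; positivity
      · simp only [mul_zero, zero_mul, add_zero]; positivity
    have ht := hc.tendsto.mono_left (nhdsWithin_le_nhds (s := Set.Ioi (0:ℝ)))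
    have hv : (δ ^ 4 * (lam / (0 * σ ^ 2 * (0 + lam) ^ 2 + (0 + lam) * δ ^ 2)) + 2 * 0 * μbar ^ 2)
          / (δ ^ 2 + 2 * 0 * μbar ^ 2) = 1 := by
      simp only [zero_mul, zero_add, mul_zero, add_zero]
      field_simp
    rw [hv] at ht
    refine ht.congr' ?_
    filter_upwards [self_mem_nhdsWithin] with κ hκ
    have hκ : 0 < κ := hκ
    rw [hη, hξ]
    generalize lam / (κ * σ ^ 2 * (κ + lam) ^ 2 + (κ + lam) * δ ^ 2) = q
    have h1 : δ ^ 4 / (4 * κ * σ ^ 2) * q + μbar ^ 2 / (2 * σ ^ 2)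
        = (δ ^ 4 * q + 2 * κ * μbar ^ 2) / (4 * κ * σ ^ 2) := by
      field_simp
      ring
    have h2 : δ ^ 2 / (4 * κ * σ ^ 2) + μbar ^ 2 / (2 * σ ^ 2)
        = (δ ^ 2 + 2 * κ * μbar ^ 2) / (4 * κ * σ ^ 2) := by
      field_simp
      ring
    rw [h1, h2, div_div_div_cancel_right₀ (by positivity)]
  · have hk : Tendsto (fun κ : ℝ => 4 * κ * σ ^ 2) atTop atTop :=
      (tendsto_id.const_mul_atTop (by norm_num : (0:ℝ) < 4)).atTop_mul_const hσ2
    have hD : Tendsto (fun κ : ℝ => κ * σ ^ 2 * (κ + lam) ^ 2 + (κ + lam) * δ ^ 2)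
        atTop atTop := by
      refine tendsto_atTop_mono' _ ?_ (tendsto_id.atTop_mul_const hδ2)
      filter_upwards [eventually_ge_atTop (0:ℝ)] with κ hκ
      have h1 : 0 ≤ κ * σ ^ 2 * (κ + lam) ^ 2 := by positivity
      have h2 : 0 ≤ lam * δ ^ 2 := by positivity
      simp only [id]
      nlinarith
    have hN := ((hk.const_div_atTop (δ ^ 4)).mul (hD.const_div_atTop lam)).add_const
      (μbar ^ 2 / (2 * σ ^ 2))
    have hX := (hk.const_div_atTop (δ ^ 2)).add_const (μbar ^ 2 / (2 * σ ^ 2))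
    have hne : 0 + μbar ^ 2 / (2 * σ ^ 2) ≠ 0 := by
      rw [zero_add]; positivity
    have h := hN.div hX hne
    rw [mul_zero, div_self hne] at h
    refine h.congr fun κ => ?_
    rw [hη, hξ]
    rfl
end

section
/- Fix κ, λ, σ > 0 and μ̄ ≠ 0. Define, for δ > 0, η(λ; δ) := (δ⁴/(4κσ²)) · λ/(κσ²(κ+λ)² + (κ+λ)δ²) + μ̄²/(2σ²), ξ(δ) := δ²/(4κσ²) + μ̄²/(2σ²), and λ̂(δ) := √(κ² + δ²/σ²). Then lim_{δ→0⁺} η(λ; δ)/ξ(δ) = 1 and lim_{δ→∞} η(λ̂(δ); δ)/ξ(δ) = 1. -/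
open Filter

/-- Asymptotics in the drift volatility `δ`:
`η(λ;δ)/ξ(δ) → 1` as `δ → 0⁺`, and `η(λ̂(δ);δ)/ξ(δ) → 1` as `δ → ∞`,
where `λ̂(δ) = √(κ² + δ²/σ²)`. -/
theorem growth_rate_ratio_limits_in_delta
    (κ lam σ μbar : ℝ) (hκ : 0 < κ) (hlam : 0 < lam) (hσ : 0 < σ) (hμ : μbar ≠ 0)
    (η : ℝ → ℝ → ℝ) (ξ lamhat : ℝ → ℝ)
    (hη : ∀ l δ : ℝ, η l δ =
      δ ^ 4 / (4 * κ * σ ^ 2) * (l / (κ * σ ^ 2 * (κ + l) ^ 2 + (κ + l) * δ ^ 2))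
        + μbar ^ 2 / (2 * σ ^ 2))
    (hξ : ∀ δ : ℝ, ξ δ = δ ^ 2 / (4 * κ * σ ^ 2) + μbar ^ 2 / (2 * σ ^ 2))
    (hlamhat : ∀ δ : ℝ, lamhat δ = Real.sqrt (κ ^ 2 + δ ^ 2 / σ ^ 2)) :
    Tendsto (fun δ : ℝ => η lam δ / ξ δ) (nhdsWithin 0 (Set.Ioi 0)) (nhds 1)
    ∧ Tendsto (fun δ : ℝ => η (lamhat δ) δ / ξ δ) atTop (nhds 1) := by
  have hm : 0 < μbar ^ 2 / (2 * σ ^ 2) := by positivity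
  constructor
  · have hc : ContinuousAt (fun δ : ℝ => η lam δ / ξ δ) 0 := by
      simp only [hη, hξ]
      refine ContinuousAt.div ?_ (by fun_prop) (by simp only [ne_eq]; positivity)
      refine ContinuousAt.add (ContinuousAt.mul (by fun_prop) ?_) (by fun_prop)
      refine ContinuousAt.div (by fun_prop) (by fun_prop) ?_
      positivity
    have h0 : η lam 0 / ξ 0 = 1 := by
      rw [hη, hξ]
      simp only [ne_eq, OfNat.ofNat_ne_zero, not_false_eq_true, zero_pow, zero_div, zero_mul,
        zero_add]
      exact div_self hm.ne'
    have ht := hc.tendsto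
    rw [h0] at ht
    exact ht.mono_left nhdsWithin_le_nhds
  · have key : ∀ δ : ℝ, 0 < δ →
        1 - 2 * κ * σ / δ ≤ η (lamhat δ) δ / ξ δ ∧ η (lamhat δ) δ / ξ δ ≤ 1 := by
      intro δ hδ
      have hL0 : 0 ≤ lamhat δ := by rw [hlamhat]; positivity
      have hsq : lamhat δ ^ 2 = κ ^ 2 + δ ^ 2 / σ ^ 2 := by
        rw [hlamhat]; exact Real.sq_sqrt (by positivity)
      generalize lamhat δ = L at *
      have hq : 0 < δ ^ 2 / σ ^ 2 := by positivity
      have hLκ : κ < L := by nlinarith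
      have hLδ : δ / σ ≤ L := by
        have : 0 < κ ^ 2 := by positivity
        have h2 : (δ / σ) ^ 2 ≤ L ^ 2 := by rw [div_pow]; linarith
        exact le_of_sq_le_sq h2 hL0
      have hδ2 : δ ^ 2 = σ ^ 2 * ((L - κ) * (L + κ)) := by
        have : δ ^ 2 / σ ^ 2 = (L - κ) * (L + κ) := by linarith
        rw [← this]; field_simp
      have hLpos : 0 < L := hκ.trans hLκ
      have e1 : η L δ = (L - κ) ^ 2 / (4 * κ) + μbar ^ 2 / (2 * σ ^ 2) := by
        rw [hη]
        congr 1
        have hd : κ * σ ^ 2 * (κ + L) ^ 2 + (κ + L) * δ ^ 2 = σ ^ 2 * (κ + L) ^ 2 * L := by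
          rw [hδ2]; ring
        have h4 : δ ^ 4 = (σ ^ 2 * ((L - κ) * (L + κ))) ^ 2 := by rw [← hδ2]; ring
        rw [hd, h4]
        have : κ + L ≠ 0 := by positivity
        field_simp
        ring
      have e2 : ξ δ = (L - κ) * (L + κ) / (4 * κ) + μbar ^ 2 / (2 * σ ^ 2) := by
        rw [hξ, hδ2]
        congr 1
        field_simp
      have hd0 : 0 < L - κ := by linarith
      have hx : (L - κ) * (L + κ) / (4 * κ) < ξ δ := by rw [e2]; linarith
      have hxp : 0 < ξ δ := lt_trans (by positivity) hx
      have e3 : η L δ = ξ δ - (L - κ) / 2 := by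
        rw [e1, e2]; field_simp; ring
      rw [e3]
      constructor
      · rw [le_div_iff₀ hxp]
        have hb : (L - κ) / 2 ≤ 2 * κ * σ / δ * ξ δ := by
          have hp : 0 < 2 * κ * σ / δ := by positivity
          refine le_trans ?_ (mul_le_mul_of_nonneg_left hx.le hp.le)
          have : 2 * κ * σ / δ * ((L - κ) * (L + κ) / (4 * κ))
              = (L - κ) / 2 * ((L + κ) * σ / δ) := by field_simp; ring
          rw [this]
          have h1 : 1 ≤ (L + κ) * σ / δ := by
            rw [le_div_iff₀ hδ]
            rw [div_le_iff₀ hσ] at hLδ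
            nlinarith
          nlinarith
        linarith
      · rw [div_le_one hxp]; linarith
    have hlow : Tendsto (fun δ : ℝ => 1 - 2 * κ * σ / δ) atTop (nhds 1) := by
      have := (tendsto_const_nhds (x := (1 : ℝ)) (f := (atTop : Filter ℝ))).sub
        ((tendsto_id (x := (atTop : Filter ℝ))).const_div_atTop (2 * κ * σ))
      simpa using this
    refine tendsto_of_tendsto_of_tendsto_of_le_of_le' hlow tendsto_const_nhds ?_ ?_
    · filter_upwards [eventually_gt_atTop 0] with δ hδ using (key δ hδ).1
    · filter_upwards [eventually_gt_atTop 0] with δ hδ using (key δ hδ).2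
end

section
/- Let κ, λ, σ, δ > 0 and μ̄ ∈ ℝ. Define a_∞ := λδ²/(σ²·(κ(κ+λ)σ² + δ²)), b_∞ := μ̄/σ² − ((2μ̄ − σ²)/(2λ))·a_∞, m̄₂ := (2μ̄ − σ²)/(2λ), v̄₂ := σ²/(2λ) + δ²/(2κλ(κ+λ)), and m̄₃ := μ̄·m̄₂ + δ²/(2κ(κ+λ)). Then a_∞·m̄₃ + b_∞·μ̄ − (σ²/2)·(a_∞²·(m̄₂² + v̄₂) + 2a_∞·b_∞·m̄₂ + b_∞²) = (δ⁴/(4κσ²)) · λ/(κσ²(κ+λ)² + (κ+λ)δ²) + μ̄²/(2σ²). -/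
/-- The long-run average log-growth of the limiting affine strategy
`f(z) = a_∞ z + b_∞` equals the optimal growth rate `η(λ)`. -/
theorem limiting_affine_strategy_growth_identity
    (κ lam σ δ μbar aInf bInf m₂ v₂ m₃ : ℝ)
    (hκ : 0 < κ) (hlam : 0 < lam) (hσ : 0 < σ) (hδ : 0 < δ)
    (haInf : aInf = lam * δ ^ 2 / (σ ^ 2 * (κ * (κ + lam) * σ ^ 2 + δ ^ 2)))
    (hbInf : bInf = μbar / σ ^ 2 - (2 * μbar - σ ^ 2) / (2 * lam) * aInf)
    (hm₂ : m₂ = (2 * μbar - σ ^ 2) / (2 * lam))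
    (hv₂ : v₂ = σ ^ 2 / (2 * lam) + δ ^ 2 / (2 * κ * lam * (κ + lam)))
    (hm₃ : m₃ = μbar * m₂ + δ ^ 2 / (2 * κ * (κ + lam))) :
    aInf * m₃ + bInf * μbar
        - σ ^ 2 / 2 * (aInf ^ 2 * (m₂ ^ 2 + v₂) + 2 * aInf * bInf * m₂ + bInf ^ 2)
      = δ ^ 4 / (4 * κ * σ ^ 2) * (lam / (κ * σ ^ 2 * (κ + lam) ^ 2 + (κ + lam) * δ ^ 2))
        + μbar ^ 2 / (2 * σ ^ 2) := by
  have hb : bInf = μbar / σ ^ 2 - m₂ * aInf := by rw [hbInf, hm₂]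
  have hD : 0 < κ * (κ + lam) * σ ^ 2 + δ ^ 2 := by positivity
  have hs : 0 < κ + lam := by positivity
  have h1 : aInf * m₃ + bInf * μbar
        - σ ^ 2 / 2 * (aInf ^ 2 * (m₂ ^ 2 + v₂) + 2 * aInf * bInf * m₂ + bInf ^ 2)
      = aInf * (δ ^ 2 / (2 * κ * (κ + lam))) - σ ^ 2 / 2 * aInf ^ 2 * v₂
        + μbar ^ 2 / (2 * σ ^ 2) := by
    rw [hm₃, hb]
    field_simp
    ring
  have hv : v₂ = (κ * (κ + lam) * σ ^ 2 + δ ^ 2) / (2 * κ * lam * (κ + lam)) := by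
    rw [hv₂]
    field_simp
  have h3 : κ * σ ^ 2 * (κ + lam) ^ 2 + (κ + lam) * δ ^ 2
      = (κ + lam) * (κ * (κ + lam) * σ ^ 2 + δ ^ 2) := by ring
  rw [h1, hv, haInf, h3]
  generalize κ * (κ + lam) * σ ^ 2 + δ ^ 2 = D at hD
  generalize κ + lam = s at hs
  field_simp
  ring
end

section
/- Let α, β, λ, σ > 0 and ρ₁ < ρ₂ be real numbers. Set n₁ := (β·ρ₁ + α·ρ₂)/(α+β), γ := αβ(ρ₁ − ρ₂)²/(α+β)², h_∞ := n₁²/λ − n₁σ²/(2λ) + γ/(λ+α+β), i_∞ := γ/(λ(λ+α+β)) + σ²/(2λ) + (n₁/λ − σ²/(2λ))², and j_∞ := n₁/λ − σ²/(2λ). Define 𝔤(x,y) := h_∞·x + n₁·y − (σ²/2)·(i_∞·x² + 2j_∞·x·y + y²). Then 𝔤 attains its unique global maximum at (c_∞, d_∞), where c_∞ = 2λγ/(2γσ² + σ⁴(λ+α+β)) and d_∞ = (γ + n₁(λ+α+β))/(2γ + σ²(λ+α+β)); moreover 𝔤(c_∞, d_∞) > 0. -/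
/-- For a two-state CTMC drift, the long-run quadratic objective `𝔤` attains its
unique global maximum at `(c_∞, d_∞)`, and the maximal value is strictly positive. -/
theorem ctmc_affine_growth_quadratic_max
    (α β lam σ ρ₁ ρ₂ : ℝ) (hα : 0 < α) (hβ : 0 < β) (hlam : 0 < lam) (hσ : 0 < σ)
    (hρ : ρ₁ < ρ₂)
    (n₁ γ hInf iInf jInf cInf dInf : ℝ)
    (hn₁ : n₁ = (β * ρ₁ + α * ρ₂) / (α + β))
    (hγ : γ = α * β * (ρ₁ - ρ₂) ^ 2 / (α + β) ^ 2)
    (hh : hInf = n₁ ^ 2 / lam - n₁ * σ ^ 2 / (2 * lam) + γ / (lam + α + β))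
    (hi : iInf = γ / (lam * (lam + α + β)) + σ ^ 2 / (2 * lam)
        + (n₁ / lam - σ ^ 2 / (2 * lam)) ^ 2)
    (hj : jInf = n₁ / lam - σ ^ 2 / (2 * lam))
    (𝔤 : ℝ → ℝ → ℝ)
    (h𝔤 : ∀ x y, 𝔤 x y = hInf * x + n₁ * y
        - σ ^ 2 / 2 * (iInf * x ^ 2 + 2 * jInf * x * y + y ^ 2))
    (hc : cInf = 2 * lam * γ / (2 * γ * σ ^ 2 + σ ^ 4 * (lam + α + β)))
    (hd : dInf = (γ + n₁ * (lam + α + β)) / (2 * γ + σ ^ 2 * (lam + α + β))) :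
    (∀ x y : ℝ, 𝔤 x y ≤ 𝔤 cInf dInf ∧ (𝔤 x y = 𝔤 cInf dInf ↔ (x, y) = (cInf, dInf)))
    ∧ 0 < 𝔤 cInf dInf := by
  have hK : 0 < lam + α + β := by positivity
  have hγ0 : 0 < γ := by
    rw [hγ]
    have : 0 < (ρ₁ - ρ₂) ^ 2 := by
      have : ρ₁ - ρ₂ ≠ 0 := (sub_neg.mpr hρ).ne
      positivity
    positivity
  clear hγ hn₁
  generalize lam + α + β = K at *
  obtain ⟨v, hv⟩ : ∃ v, v = (2 * γ + σ ^ 2 * K) / (2 * lam * K) := ⟨_, rfl⟩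
  have hv0 : 0 < v := by rw [hv]; positivity
  have e1 : hInf = n₁ * jInf + γ / K := by rw [hh, hj]; field_simp
  have e2 : iInf = v + jInf ^ 2 := by rw [hi, hj, hv]; field_simp; try ring
  have hD : 0 < 2 * γ + σ ^ 2 * K := by positivity
  have hc' : cInf = 2 * lam * γ / (σ ^ 2 * (2 * γ + σ ^ 2 * K)) := by
    rw [hc]; congr 1; ring
  have e3 : γ / K = σ ^ 2 * v * cInf := by rw [hc', hv]; field_simp
  have e4 : n₁ = σ ^ 2 * (jInf * cInf + dInf) := by
    rw [hc', hd, hj]; field_simp; ring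
  have hc0 : 0 < cInf := by rw [hc']; positivity
  clear hh hi hj hc hd hc' hv
  have key : ∀ x y, 𝔤 x y = σ ^ 2 / 2 * (v * cInf ^ 2 + (jInf * cInf + dInf) ^ 2)
      - σ ^ 2 / 2 * (v * (x - cInf) ^ 2 + (jInf * (x - cInf) + (y - dInf)) ^ 2) := by
    intro x y
    rw [h𝔤, e1, e3, e2, e4]; ring
  have hmax : 𝔤 cInf dInf = σ ^ 2 / 2 * (v * cInf ^ 2 + (jInf * cInf + dInf) ^ 2) := by
    rw [key]; ring
  refine ⟨fun x y => ⟨?_, ?_, ?_⟩, ?_⟩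
  · rw [hmax, key x y]
    have : 0 ≤ σ ^ 2 / 2 * (v * (x - cInf) ^ 2 + (jInf * (x - cInf) + (y - dInf)) ^ 2) := by
      positivity
    linarith
  · intro h
    rw [hmax, key x y] at h
    have h0 : σ ^ 2 / 2 * (v * (x - cInf) ^ 2 + (jInf * (x - cInf) + (y - dInf)) ^ 2) = 0 := by
      linarith
    have h1 : v * (x - cInf) ^ 2 + (jInf * (x - cInf) + (y - dInf)) ^ 2 = 0 :=
      (mul_eq_zero.mp h0).resolve_left (by positivity)
    have p1 : 0 ≤ v * (x - cInf) ^ 2 := by positivity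
    have p2 := sq_nonneg (jInf * (x - cInf) + (y - dInf))
    have h2 : v * (x - cInf) ^ 2 = 0 := by linarith
    have h3 : (jInf * (x - cInf) + (y - dInf)) ^ 2 = 0 := by linarith
    have h4 : x - cInf = 0 := pow_eq_zero_iff two_ne_zero |>.mp
      ((mul_eq_zero.mp h2).resolve_left hv0.ne')
    have h5 := pow_eq_zero_iff two_ne_zero |>.mp h3
    rw [h4] at h5
    exact Prod.ext (by simpa [sub_eq_zero] using h4) (by simpa [sub_eq_zero] using h5)
  · intro h
    obtain ⟨rfl, rfl⟩ := Prod.mk.inj h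
    rfl
  · rw [hmax]; positivity
end

section
/- Let α, β, λ > 0 and ρ₁ < ρ₂ be real numbers, and let c > 0 and d := βc/α. For z ∈ (ρ₁/λ, ρ₂/λ) define l(z) := (λz − ρ₁)^{α/λ − 1}·(ρ₂ − λz)^{β/λ − 1}, and for x ∈ [ρ₁/λ, ρ₂/λ] define u(x) := c·∫_{ρ₁/λ}^{x} (ρ₂ − λz)·l(z) dz and v(x) := d·∫_{ρ₁/λ}^{x} (λz − ρ₁)·l(z) dz. Then for every x ∈ (ρ₁/λ, ρ₂/λ), u is differentiable at x with u'(x) = c(ρ₂ − λx)l(x), v is differentiable at x with v'(x) = d(λx − ρ₁)l(x), and the pair (u, v) satisfies the ODE system (ρ₁ − λx)·u'(x) + α·u(x) − α·v(x) = 0 and (ρ₂ − λx)·v'(x) + β·v(x) − β·u(x) = 0. -/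
/-- The Beta-type functions `u, v` are differentiable on `(ρ₁/λ, ρ₂/λ)`, with the
stated derivatives, and solve the ODE system from the two-state CTMC dynamics. -/
theorem beta_cdf_ode_system
    (α β lam ρ₁ ρ₂ c d : ℝ) (hα : 0 < α) (hβ : 0 < β) (hlam : 0 < lam) (hρ : ρ₁ < ρ₂)
    (hc : 0 < c) (hd : d = β * c / α)
    (l u v : ℝ → ℝ)
    (hl : ∀ z, l z = (lam * z - ρ₁) ^ (α / lam - 1) * (ρ₂ - lam * z) ^ (β / lam - 1))
    (hu : ∀ x, u x = c * ∫ z in (ρ₁ / lam)..x, (ρ₂ - lam * z) * l z)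
    (hv : ∀ x, v x = d * ∫ z in (ρ₁ / lam)..x, (lam * z - ρ₁) * l z) :
    ∀ x ∈ Set.Ioo (ρ₁ / lam) (ρ₂ / lam),
      HasDerivAt u (c * (ρ₂ - lam * x) * l x) x
      ∧ HasDerivAt v (d * (lam * x - ρ₁) * l x) x
      ∧ (ρ₁ - lam * x) * (c * (ρ₂ - lam * x) * l x) + α * u x - α * v x = 0
      ∧ (ρ₂ - lam * x) * (d * (lam * x - ρ₁) * l x) + β * v x - β * u x = 0 := by
  obtain rfl : l = fun z => (lam * z - ρ₁) ^ (α / lam - 1) * (ρ₂ - lam * z) ^ (β / lam - 1) :=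
    funext hl
  intro x hx
  obtain ⟨hx1, hx2⟩ := hx
  have hp : 0 < α / lam := by positivity
  have hq : 0 < β / lam := by positivity
  have ha : ∀ z, ρ₁ / lam < z → 0 < lam * z - ρ₁ := fun z hz => by
    rw [div_lt_iff₀ hlam] at hz; linarith
  have hb : ∀ z, z ≤ x → 0 < ρ₂ - lam * z := fun z hz => by
    have hz2 := lt_of_le_of_lt hz hx2
    rw [lt_div_iff₀ hlam] at hz2; linarith
  have ha0 : lam * (ρ₁ / lam) - ρ₁ = 0 := by field_simp; ring
  set L : ℝ → ℝ := fun z => (lam * z - ρ₁) ^ (α / lam - 1) * (ρ₂ - lam * z) ^ (β / lam - 1) with hL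
  have hI0 : IntervalIntegrable (fun z : ℝ => (lam * z - ρ₁) ^ (α / lam - 1))
      MeasureTheory.volume (ρ₁ / lam) x := by
    have h1 : IntervalIntegrable (fun z : ℝ => z ^ (α / lam - 1))
        MeasureTheory.volume 0 (lam * x - ρ₁) :=
      intervalIntegral.intervalIntegrable_rpow' (by linarith)
    have h2 := (h1.comp_sub_right ρ₁).comp_mul_left (c := lam)
    have e : lam * x / lam = x := by field_simp
    simpa [e] using h2
  have hIL : IntervalIntegrable L MeasureTheory.volume (ρ₁ / lam) x := by
    refine hI0.mul_continuousOn ?_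
    refine ContinuousOn.rpow_const (by fun_prop) ?_
    intro z hz
    rw [Set.uIcc_of_le hx1.le] at hz
    exact Or.inl (hb z hz.2).ne'
  have hI1 : IntervalIntegrable (fun z => (ρ₂ - lam * z) * L z)
      MeasureTheory.volume (ρ₁ / lam) x := hIL.continuousOn_mul (by fun_prop)
  have hI2 : IntervalIntegrable (fun z => (lam * z - ρ₁) * L z)
      MeasureTheory.volume (ρ₁ / lam) x := hIL.continuousOn_mul (by fun_prop)
  have hLc : ContinuousAt L x := by
    refine ContinuousAt.mul ?_ ?_
    · exact ContinuousAt.rpow_const (by fun_prop) (Or.inl (ha x hx1).ne')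
    · exact ContinuousAt.rpow_const (by fun_prop) (Or.inl (hb x le_rfl).ne')
  have hLm : Measurable L := by
    rw [hL]; fun_prop
  have hd1 := intervalIntegral.integral_hasDerivAt_right hI1
    (Measurable.stronglyMeasurable (by fun_prop)).stronglyMeasurableAtFilter
    (ContinuousAt.mul (by fun_prop) hLc)
  have hd2 := intervalIntegral.integral_hasDerivAt_right hI2
    (Measurable.stronglyMeasurable (by fun_prop)).stronglyMeasurableAtFilter
    (ContinuousAt.mul (by fun_prop) hLc)
  have key : (∫ z in (ρ₁ / lam)..x, (α * ((ρ₂ - lam * z) * L z) - β * ((lam * z - ρ₁) * L z)))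
      = (lam * x - ρ₁) ^ (α / lam) * (ρ₂ - lam * x) ^ (β / lam)
        - (lam * (ρ₁ / lam) - ρ₁) ^ (α / lam) * (ρ₂ - lam * (ρ₁ / lam)) ^ (β / lam) := by
    refine intervalIntegral.integral_eq_sub_of_hasDerivAt_of_le
      (f := fun z => (lam * z - ρ₁) ^ (α / lam) * (ρ₂ - lam * z) ^ (β / lam)) hx1.le ?_ ?_ ?_
    · refine ContinuousOn.mul ?_ ?_
      · exact ContinuousOn.rpow_const (by fun_prop) (fun z _ => Or.inr hp.le)
      · exact ContinuousOn.rpow_const (by fun_prop) (fun z _ => Or.inr hq.le)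
    · intro z hz
      have hA := ha z hz.1
      have hB := hb z hz.2.le
      have dA : HasDerivAt (fun z : ℝ => lam * z - ρ₁) lam z := by
        simpa using ((hasDerivAt_id z).const_mul lam).sub_const ρ₁
      have dB : HasDerivAt (fun z : ℝ => ρ₂ - lam * z) (-lam) z := by
        simpa using ((hasDerivAt_id z).const_mul lam).const_sub ρ₂
      have h := (dA.rpow_const (p := α / lam) (Or.inl hA.ne')).mul
        (dB.rpow_const (p := β / lam) (Or.inl hB.ne'))
      refine h.congr_deriv ?_
      have eA : (lam * z - ρ₁) ^ (α / lam) = (lam * z - ρ₁) ^ (α / lam - 1) * (lam * z - ρ₁) := by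
        rw [Real.rpow_sub_one hA.ne']; field_simp
      have eB : (ρ₂ - lam * z) ^ (β / lam) = (ρ₂ - lam * z) ^ (β / lam - 1) * (ρ₂ - lam * z) := by
        rw [Real.rpow_sub_one hB.ne']; field_simp
      have e1 : lam * (α / lam) = α := by field_simp
      have e2 : -lam * (β / lam) = -β := by field_simp
      simp only [hL]
      rw [eA, eB, e1, e2]
      ring
    · exact (hI1.const_mul α).sub (hI2.const_mul β)
  rw [intervalIntegral.integral_sub (hI1.const_mul α) (hI2.const_mul β),
    intervalIntegral.integral_const_mul, intervalIntegral.integral_const_mul, ha0,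
    Real.zero_rpow hp.ne', zero_mul, sub_zero] at key
  have hW : (lam * x - ρ₁) ^ (α / lam) * (ρ₂ - lam * x) ^ (β / lam)
      = (lam * x - ρ₁) * (ρ₂ - lam * x) * L x := by
    have hA := ha x hx1
    have hB := hb x le_rfl
    simp only [hL]
    rw [Real.rpow_sub_one hA.ne', Real.rpow_sub_one hB.ne']
    field_simp
  rw [hW] at key
  have hda : α * d = β * c := by rw [hd]; field_simp
  refine ⟨?_, ?_, ?_, ?_⟩
  · rw [funext hu]
    exact (hd1.const_mul c).congr_deriv (by ring)
  · rw [funext hv]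
    exact (hd2.const_mul d).congr_deriv (by ring)
  · rw [hu, hv]
    linear_combination c * key - (∫ z in (ρ₁ / lam)..x, (lam * z - ρ₁) * L z) * hda
  · rw [hu, hv]
    linear_combination (-d) * key + (∫ z in (ρ₁ / lam)..x, (ρ₂ - lam * z) * L z) * hda
end

section
/- Let κ, λ, δ, σ > 0 with κ ≠ λ, and let μ̄, m₀, v₀ ∈ ℝ. Define for t ≥ 0: m₁(t) := μ̄ + (m₀ − μ̄)e^{−κt}; v₁(t) := δ²/(2κ) + (v₀ − δ²/(2κ))e^{−2κt}; m₂(t) := (2μ̄ − σ²)/(2λ) + ((λm₀ − κμ̄)/(λ(κ−λ)) + σ²/(2λ))e^{−λt} + ((μ̄ − m₀)/(κ−λ))e^{−κt}; v₂(t) := σ²/(2λ) + δ²/(2κλ(κ+λ)) + ((v₀ − δ²/(2λ))/(κ−λ)² − σ²/(2λ))e^{−2λt} + ((v₀ − δ²/(2κ))/(κ−λ)²)e^{−2κt} − (2(v₀ − δ²/(κ+λ))/(κ−λ)²)e^{−(κ+λ)t}; and m₃(t) := (1/λ)(κμ̄/(κ−λ) − σ²/2)(1 − e^{−λt})·m₁(t)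 + (e^{−λt}/(κ−λ))·(μ̄(1 − e^{−κt})m₀ + e^{−κt}(m₀² + v₀)) − (v₁(t) + m₁(t)²)/(κ−λ) + (δ²/(κ² − λ²))(1 − e^{−(κ+λ)t}). Then, as t → ∞, (m₃(t) − m₁(t)m₂(t))/(v₂(t)σ²) converges to a_∞ := λδ²/(σ²(κ(κ+λ)σ² + δ²)), and m₁(t)/σ² − m₂(t)(m₃(t) − m₁(t)m₂(t))/(v₂(t)σ²) converges to b_∞ := μ̄/σ² − ((2μ̄ − σ²)/(2λ))·a_∞. -/
open Filter

/-- Convergence of the time-dependent optimal affine coefficients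
`a₂*(t) = (m₃ − m₁m₂)/(v₂σ²)` and `b₂*(t) = m₁/σ² − m₂(m₃ − m₁m₂)/(v₂σ²)` to the limiting
strategy coefficients `a_∞`, `b_∞` as `t → ∞`. -/
theorem ou_optimal_affine_coefficients_limit
    (κ lam δ σ μbar m₀ v₀ : ℝ)
    (hκ : 0 < κ) (hlam : 0 < lam) (hδ : 0 < δ) (hσ : 0 < σ) (hne : κ ≠ lam)
    (m₁ v₁ m₂ v₂ m₃ : ℝ → ℝ)
    (hm₁ : ∀ t, m₁ t = μbar + (m₀ - μbar) * Real.exp (-κ * t))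
    (hv₁ : ∀ t, v₁ t = δ ^ 2 / (2 * κ) + (v₀ - δ ^ 2 / (2 * κ)) * Real.exp (-2 * κ * t))
    (hm₂ : ∀ t, m₂ t = (2 * μbar - σ ^ 2) / (2 * lam)
        + ((lam * m₀ - κ * μbar) / (lam * (κ - lam)) + σ ^ 2 / (2 * lam))
            * Real.exp (-lam * t)
        + (μbar - m₀) / (κ - lam) * Real.exp (-κ * t))
    (hv₂ : ∀ t, v₂ t = σ ^ 2 / (2 * lam) + δ ^ 2 / (2 * κ * lam * (κ + lam))
        + ((v₀ - δ ^ 2 / (2 * lam)) / (κ - lam) ^ 2 - σ ^ 2 / (2 * lam))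
            * Real.exp (-2 * lam * t)
        + (v₀ - δ ^ 2 / (2 * κ)) / (κ - lam) ^ 2 * Real.exp (-2 * κ * t)
        - 2 * (v₀ - δ ^ 2 / (κ + lam)) / (κ - lam) ^ 2 * Real.exp (-(κ + lam) * t))
    (hm₃ : ∀ t, m₃ t = 1 / lam * (κ * μbar / (κ - lam) - σ ^ 2 / 2)
            * (1 - Real.exp (-lam * t)) * m₁ t
        + Real.exp (-lam * t) / (κ - lam)
            * (μbar * (1 - Real.exp (-κ * t)) * m₀ + Real.exp (-κ * t) * (m₀ ^ 2 + v₀))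
        - (v₁ t + (m₁ t) ^ 2) / (κ - lam)
        + δ ^ 2 / (κ ^ 2 - lam ^ 2) * (1 - Real.exp (-(κ + lam) * t)))
    (aInf bInf : ℝ)
    (haInf : aInf = lam * δ ^ 2 / (σ ^ 2 * (κ * (κ + lam) * σ ^ 2 + δ ^ 2)))
    (hbInf : bInf = μbar / σ ^ 2 - (2 * μbar - σ ^ 2) / (2 * lam) * aInf) :
    Tendsto (fun t : ℝ => (m₃ t - m₁ t * m₂ t) / (v₂ t * σ ^ 2)) atTop (nhds aInf)
    ∧ Tendsto (fun t : ℝ =>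
        m₁ t / σ ^ 2 - m₂ t * (m₃ t - m₁ t * m₂ t) / (v₂ t * σ ^ 2)) atTop (nhds bInf) := by
  have hE : ∀ c : ℝ, c < 0 → Tendsto (fun t : ℝ => Real.exp (c * t)) atTop (nhds 0) := by
    intro c hc
    exact Real.tendsto_exp_atBot.comp (tendsto_id.const_mul_atTop_of_neg hc)
  have e1 := hE (-κ) (by linarith)
  have e2 := hE (-lam) (by linarith)
  have e3 := hE (-2 * κ) (by linarith)
  have e4 := hE (-2 * lam) (by linarith)
  have e5 := hE (-(κ + lam)) (by linarith)
  have hd : κ - lam ≠ 0 := sub_ne_zero.mpr hne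
  have hs : κ + lam ≠ 0 := by positivity
  have hd2 : κ ^ 2 - lam ^ 2 ≠ 0 := by
    have h : κ ^ 2 - lam ^ 2 = (κ - lam) * (κ + lam) := by ring
    rw [h]; exact mul_ne_zero hd hs
  have l1 : Tendsto m₁ atTop (nhds μbar) := by
    rw [funext hm₁]
    simpa using (e1.const_mul (m₀ - μbar)).const_add μbar
  have lv1 : Tendsto v₁ atTop (nhds (δ ^ 2 / (2 * κ))) := by
    rw [funext hv₁]
    simpa using (e3.const_mul (v₀ - δ ^ 2 / (2 * κ))).const_add (δ ^ 2 / (2 * κ))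
  have l2 : Tendsto m₂ atTop (nhds ((2 * μbar - σ ^ 2) / (2 * lam))) := by
    rw [funext hm₂]
    have h := ((e2.const_mul ((lam * m₀ - κ * μbar) / (lam * (κ - lam)) + σ ^ 2 / (2 * lam))).const_add
      ((2 * μbar - σ ^ 2) / (2 * lam))).add (e1.const_mul ((μbar - m₀) / (κ - lam)))
    simpa only [mul_zero, add_zero] using h
  have lv2 : Tendsto v₂ atTop
      (nhds (σ ^ 2 / (2 * lam) + δ ^ 2 / (2 * κ * lam * (κ + lam)))) := by
    rw [funext hv₂]
    have h := (((e4.const_mul ((v₀ - δ ^ 2 / (2 * lam)) / (κ - lam) ^ 2 - σ ^ 2 / (2 * lam))).const_add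
      (σ ^ 2 / (2 * lam) + δ ^ 2 / (2 * κ * lam * (κ + lam)))).add
      (e3.const_mul ((v₀ - δ ^ 2 / (2 * κ)) / (κ - lam) ^ 2))).sub
      (e5.const_mul (2 * (v₀ - δ ^ 2 / (κ + lam)) / (κ - lam) ^ 2))
    simpa only [mul_zero, add_zero, sub_zero] using h
  have l3 : Tendsto m₃ atTop (nhds (1 / lam * (κ * μbar / (κ - lam) - σ ^ 2 / 2) * μbar
      - (δ ^ 2 / (2 * κ) + μbar ^ 2) / (κ - lam) + δ ^ 2 / (κ ^ 2 - lam ^ 2))) := by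
    rw [funext hm₃]
    have h := ((((e2.const_sub 1).const_mul
      (1 / lam * (κ * μbar / (κ - lam) - σ ^ 2 / 2))).mul l1).add
      ((e2.div_const (κ - lam)).mul ((((e1.const_sub 1).const_mul μbar).mul_const m₀).add
        (e1.mul_const (m₀ ^ 2 + v₀))))).sub ((lv1.add (l1.pow 2)).div_const (κ - lam))
    have h' := h.add ((e5.const_sub 1).const_mul (δ ^ 2 / (κ ^ 2 - lam ^ 2)))
    simpa only [zero_div, zero_mul, mul_zero, add_zero, sub_zero, mul_one] using h'
  have hc : 1 / lam * (κ * μbar / (κ - lam) - σ ^ 2 / 2) * μbar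
      - (δ ^ 2 / (2 * κ) + μbar ^ 2) / (κ - lam) + δ ^ 2 / (κ ^ 2 - lam ^ 2)
      - μbar * ((2 * μbar - σ ^ 2) / (2 * lam)) = δ ^ 2 / (2 * κ * (κ + lam)) := by
    have h : κ ^ 2 - lam ^ 2 = (κ - lam) * (κ + lam) := by ring
    rw [h]
    field_simp
    ring
  have lc := l3.sub (l1.mul l2)
  rw [hc] at lc
  have hA : Tendsto (fun t : ℝ => (m₃ t - m₁ t * m₂ t) / (v₂ t * σ ^ 2)) atTop (nhds aInf) := by
    have h := lc.div (lv2.mul_const (σ ^ 2)) (by positivity)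
    have he : δ ^ 2 / (2 * κ * (κ + lam)) /
        ((σ ^ 2 / (2 * lam) + δ ^ 2 / (2 * κ * lam * (κ + lam))) * σ ^ 2) = aInf := by
      rw [haInf]
      have hp : κ * (κ + lam) * σ ^ 2 + δ ^ 2 ≠ 0 := by positivity
      have hq : σ ^ 2 / (2 * lam) + δ ^ 2 / (2 * κ * lam * (κ + lam))
          = (κ * (κ + lam) * σ ^ 2 + δ ^ 2) / (2 * κ * lam * (κ + lam)) := by
        field_simp
      rw [hq]
      field_simp
    rw [he] at h
    exact h
  refine ⟨hA, ?_⟩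
  rw [hbInf]
  have h := (l1.div_const (σ ^ 2)).sub (l2.mul hA)
  simpa only [mul_div_assoc] using h
end
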